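/- Fix integers 1 ≤ m ≤ n and suppose E_Q[r̄(X₁)²] < ∞. Let Z₁,…,Z_m be i.i.d. with distribution P and α_φ := P(φ_m(Z₁,…,Z_m) = 1). Define V(n,m) := C(n,m)^{−1}·Σ_{ℓ=1}^{m} C(m,ℓ)·C(n−m, m−ℓ)·(E_Q[r̄(X₁)²]^ℓ − 1), where C(a,b) denotes the binomial coefficient, equal to 0 when b > a. Then for every δ ∈ (0,1), E_Q[c(n,m)/d(n,m)] ≤ α_φ/(1−δ) + V(n,m)/(V(n,m) + δ²); consequently the rejection probability of the DRPL resampling test at sample size n is at most inf_{δ∈(0,1)} (α_φ/(1−δ) + V(n,m)/(V(n,m) + δ²)). -/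

import Mathlib

open MeasureTheory Filter Topology
open scoped ENNReal

/-- `dStat r n m x` is the normalizing statistic
`d(n,m) = ((n-m)!/n!) · Σ_{(j₁,…,j_m) distinct} ∏_ℓ r̄(x_{j_ℓ})`,
the sum ranging over all `m`-tuples of pairwise distinct indices in `{1,…,n}`. -/
noncomputable def dStat {𝒳 : Type*} (r : 𝒳 → ℝ) (n m : ℕ) (x : Fin n → 𝒳) : ℝ :=
  ((n - m).factorial : ℝ) / (n.factorial : ℝ) *
    ∑ i ∈ Finset.univ.filter (fun i : Fin m → Fin n => Function.Injective i),
      ∏ ℓ, r (x (i ℓ))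

/-- `cStat r A n m x` is the numerator statistic
`c(n,m) = ((n-m)!/n!) · Σ_{(i₁,…,i_m) distinct} (∏_ℓ r̄(x_{i_ℓ})) · 1{(x_{i₁},…,x_{i_m}) ∈ A m}`,
where `A m` is the acceptance region `{φ_m = 1}` of the test `φ_m`. -/
noncomputable def cStat {𝒳 : Type*} (r : 𝒳 → ℝ) (A : ∀ k : ℕ, Set (Fin k → 𝒳))
    (n m : ℕ) (x : Fin n → 𝒳) : ℝ :=
  ((n - m).factorial : ℝ) / (n.factorial : ℝ) *
    ∑ i ∈ Finset.univ.filter (fun i : Fin m → Fin n => Function.Injective i),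
      (∏ ℓ, r (x (i ℓ))) * (A m).indicator (fun _ => (1 : ℝ)) (fun ℓ => x (i ℓ))

open ProbabilityTheory
open scoped BigOperators Finset symmDiff

/-!
Both `c(n, m)` and `d(n, m)` are U-statistics: averages, over all injective selections of `m` of
the `n` sample points, of the importance weight `∏ r̄` of the selected tuple, restricted to the
rejection region in the case of `c`. Integrating the weight against `Q^m` changes the measure to
`P^m`, so `c` has mean `α_φ` and `d` has mean `1`.

By symmetry of the weight, `d` is an average over `m`-subsets `S` of the products
`W_S = ∏_{j ∈ S} r̄(X_j)`, and `cov(W_S, W_T) = ρ ^ |S ∩ T| - 1` with `ρ = E_Q[r̄²]`. Counting the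
`T` with a given overlap with a fixed `S` yields `Var d = V(n, m)`.

Where `d > 1 - δ`, the ratio `c / d` is at most `c / (1 - δ)`; elsewhere it is at most `1`, and
Cantelli's one-sided inequality bounds the probability of that event by `V / (V + δ²)`.
-/

section Tail

variable {Ω : Type*} [MeasurableSpace Ω] {μ : Measure Ω} [IsProbabilityMeasure μ]

lemma cantelli_measureReal_le_integral_sub {X : Ω → ℝ} (hX : MemLp X 2 μ) {δ : ℝ}
    (hδ : 0 < δ) :
    μ.real {ω | X ω ≤ μ[X] - δ} ≤ Var[X; μ] / (Var[X; μ] + δ ^ 2) := by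
  set V := Var[X; μ]
  have hV0 : 0 ≤ V := variance_nonneg X μ
  -- The shift `V / δ` minimises the Markov bound over all shifts `t`.
  set t := V / δ with ht
  have hδt : 0 < δ + t := add_pos_of_pos_of_nonneg hδ (div_nonneg hV0 hδ.le)
  have hVt : V = t * δ := by rw [ht]; field_simp
  have hY : MemLp (fun ω ↦ (μ[X] + t) - X ω) 2 μ := (memLp_const _).sub hX
  have hmean : ∫ ω, ((μ[X] + t) - X ω) ∂μ = t := by
    rw [integral_sub (integrable_const _) (hX.integrable one_le_two)]
    simp
  have hmoment : ∫ ω, ((μ[X] + t) - X ω) ^ 2 ∂μ = V + t ^ 2 := by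
    have h := variance_eq_sub hY
    rw [variance_const_sub hX.aestronglyMeasurable, hmean] at h
    simp only [Pi.pow_apply] at h
    linarith
  have hsubset : {ω | X ω ≤ μ[X] - δ} ⊆ {ω | (δ + t) ^ 2 ≤ ((μ[X] + t) - X ω) ^ 2} := by
    intro ω hω
    rw [Set.mem_ofPred_eq] at hω ⊢
    exact pow_le_pow_left₀ hδt.le (by linarith) 2
  have hmarkov : (δ + t) ^ 2 * μ.real {ω | X ω ≤ μ[X] - δ} ≤ V + t ^ 2 :=
    calc (δ + t) ^ 2 * μ.real {ω | X ω ≤ μ[X] - δ}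
        ≤ (δ + t) ^ 2 * μ.real {ω | (δ + t) ^ 2 ≤ ((μ[X] + t) - X ω) ^ 2} :=
          mul_le_mul_of_nonneg_left (measureReal_mono hsubset) (sq_nonneg _)
      _ ≤ ∫ ω, ((μ[X] + t) - X ω) ^ 2 ∂μ :=
          mul_meas_ge_le_integral_of_nonneg (ae_of_all _ fun _ ↦ sq_nonneg _) hY.integrable_sq _
      _ = V + t ^ 2 := hmoment
  calc μ.real {ω | X ω ≤ μ[X] - δ} ≤ (V + t ^ 2) / (δ + t) ^ 2 := by
        rwa [le_div_iff₀' (pow_pos hδt 2)]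
    _ = V / (V + δ ^ 2) := by
        rw [div_eq_div_iff (pow_pos hδt 2).ne' (by positivity), hVt]
        ring

lemma integral_div_le_integral_div_add_variance_div {c d : Ω → ℝ} (hc : Integrable c μ)
    (hd : MemLp d 2 μ) (hc0 : 0 ≤ c) (hcd : c ≤ d) {δ : ℝ} (hδ : 0 < δ) (hδd : δ < μ[d]) :
    ∫ ω, c ω / d ω ∂μ ≤ μ[c] / (μ[d] - δ) + Var[d; μ] / (Var[d; μ] + δ ^ 2) := by
  set E := {ω | d ω ≤ μ[d] - δ}
  have hE : NullMeasurableSet E μ := nullMeasurableSet_le hd.aemeasurable aemeasurable_const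
  have hEint : Integrable (E.indicator (1 : Ω → ℝ)) μ :=
    (integrable_const (1 : ℝ)).indicator₀ hE
  have hpointwise (ω : Ω) : c ω / d ω ≤ c ω / (μ[d] - δ) + E.indicator 1 ω := by
    by_cases hω : ω ∈ E
    · have hratio : c ω / d ω ≤ 1 := div_le_one_of_le₀ (hcd ω) ((hc0 ω).trans (hcd ω))
      have hc' : 0 ≤ c ω / (μ[d] - δ) := div_nonneg (hc0 ω) (by linarith)
      simp only [Set.indicator_of_mem hω, Pi.one_apply]
      linarith
    · have hdω : μ[d] - δ ≤ d ω := (not_le.mp hω).le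
      simpa [Set.indicator_of_notMem hω] using
        div_le_div_of_nonneg_left (hc0 ω) (by linarith) hdω
  calc ∫ ω, c ω / d ω ∂μ ≤ ∫ ω, (c ω / (μ[d] - δ) + E.indicator 1 ω) ∂μ :=
        integral_mono_of_nonneg (ae_of_all _ fun ω ↦ div_nonneg (hc0 ω) ((hc0 ω).trans (hcd ω)))
          ((hc.div_const _).add hEint) (ae_of_all _ hpointwise)
    _ = μ[c] / (μ[d] - δ) + μ.real E := by
        rw [integral_add (hc.div_const _) hEint, integral_div, integral_indicator₀ hE]
        simp
    _ ≤ μ[c] / (μ[d] - δ) + Var[d; μ] / (Var[d; μ] + δ ^ 2) := by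
        gcongr
        exact cantelli_measureReal_le_integral_sub hd hδ

end Tail

section Counting

open Finset

variable {ι κ : Type*} [Fintype ι] [Fintype κ]

lemma card_filter_map_embedding_eq [DecidableEq ι] {t : Finset ι} (ht : #t = Fintype.card κ) :
    #{e : κ ↪ ι | univ.map e = t} = (Fintype.card κ).factorial := by
  have hmem (e : κ ↪ ι) : univ.map e = t ↔ ∀ l, e l ∈ t := by
    rw [← Finset.subset_iff_eq_of_card_le (by simp [ht])]
    simp [Finset.subset_iff]
  let fiberEquiv : {e : κ ↪ ι // univ.map e = t} ≃ (κ ↪ t) :=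
    { toFun e := Function.Embedding.codRestrict _ e.1 ((hmem e.1).1 e.2)
      invFun f := ⟨f.trans (.subtype _), (hmem _).2 fun l ↦ (f l).2⟩
      left_inv _ := rfl
      right_inv _ := rfl }
  rw [← Fintype.card_subtype, Fintype.card_congr fiberEquiv, Fintype.card_embedding_eq,
    Fintype.card_coe, ht, Nat.descFactorial_self]

lemma expect_embedding_map {R : Type*} [Semifield R] [CharZero R] (g : Finset ι → R) :
    𝔼 e : κ ↪ ι, g (univ.map e) = 𝔼 t ∈ univ.powersetCard (Fintype.card κ), g t := by
  classical
  have hsum : ∑ e : κ ↪ ι, g (univ.map e)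
      = (Fintype.card κ).factorial * ∑ t ∈ univ.powersetCard (Fintype.card κ), g t := by
    rw [← sum_fiberwise_of_maps_to (g := fun e : κ ↪ ι ↦ univ.map e)
      (t := univ.powersetCard (Fintype.card κ)) (by simp [mem_powersetCard]), mul_sum]
    refine sum_congr rfl fun t ht ↦ ?_
    rw [← card_filter_map_embedding_eq (κ := κ) (mem_powersetCard.1 ht).2, ← nsmul_eq_mul,
      ← sum_const]
    exact sum_congr rfl fun e he ↦ by rw [(mem_filter.1 he).2]
  rw [Fintype.expect_eq_sum_div_card, expect_eq_sum_div_card, hsum, Fintype.card_embedding_eq,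
    Nat.descFactorial_eq_factorial_mul_choose, card_powersetCard, card_univ, Nat.cast_mul]
  exact mul_div_mul_left _ _ (Nat.cast_ne_zero.2 (Nat.factorial_ne_zero _))

lemma card_filter_powersetCard_card_inter_eq [DecidableEq ι] (s : Finset ι) {k l : ℕ} (hl : l ≤ k) :
    #{t ∈ univ.powersetCard k | #(s ∩ t) = l} = (#s).choose l * (#sᶜ).choose (k - l) := by
  rw [← card_powersetCard, ← card_powersetCard, ← card_product]
  have hmem (p : Finset ι × Finset ι) :
      p ∈ (s.powersetCard l ×ˢ sᶜ.powersetCard (k - l) : Finset _)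
        ↔ (p.1 ⊆ s ∧ #p.1 = l) ∧ p.2 ⊆ sᶜ ∧ #p.2 = k - l := by
    simp only [mem_product, mem_powersetCard]
  refine card_nbij' (fun t ↦ (s ∩ t, t \ s)) (fun p ↦ p.1 ∪ p.2) ?_ ?_ ?_ ?_
  · intro t ht
    rw [mem_coe, hmem]
    grind [mem_compl]
  · rintro ⟨a, b⟩ hp
    rw [mem_coe, hmem] at hp
    have hdisj : Disjoint a b := disjoint_compl_right.mono hp.1.1 hp.2.1
    have hinter : s ∩ (a ∪ b) = a := by grind [mem_compl]
    have hcard := card_union_of_disjoint hdisj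
    simp only [coe_filter, mem_powersetCard_univ, Set.mem_ofPred_eq]
    grind
  · intro t _
    grind
  · rintro ⟨a, b⟩ hp
    rw [mem_coe, hmem] at hp
    exact Prod.ext (show s ∩ (a ∪ b) = a by grind [mem_compl])
      (show (a ∪ b) \ s = b by grind [mem_compl])

lemma sum_powersetCard_card_inter {R : Type*} [Semiring R] [DecidableEq ι] (s : Finset ι) (k : ℕ)
    (g : ℕ → R) :
    ∑ t ∈ univ.powersetCard k, g #(s ∩ t)
      = ∑ l ∈ range (k + 1), ((#s).choose l * (#sᶜ).choose (k - l) : R) * g l := by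
  rw [← sum_fiberwise_of_maps_to (g := fun t ↦ #(s ∩ t)) (t := range (k + 1))]
  · refine sum_congr rfl fun l hl ↦ ?_
    rw [← Nat.cast_mul, ← card_filter_powersetCard_card_inter_eq s (mem_range_succ_iff.1 hl),
      ← nsmul_eq_mul, ← sum_const]
    exact sum_congr rfl fun t ht ↦ by rw [(mem_filter.1 ht).2]
  · intro t ht
    rw [mem_range_succ_iff, ← (mem_powersetCard.1 ht).2]
    exact card_le_card inter_subset_right

end Counting

section Product

variable {ι : Type*} [Fintype ι]

lemma pi_withDensity_ofReal {α : ι → Type*} [∀ i, MeasurableSpace (α i)]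
    {μ : ∀ i, Measure (α i)} [∀ i, SigmaFinite (μ i)] {f : ∀ i, α i → ℝ}
    (hf : ∀ i, Integrable (f i) (μ i)) (hf0 : ∀ i, 0 ≤ f i) :
    Measure.pi (fun i ↦ (μ i).withDensity fun a ↦ ENNReal.ofReal (f i a))
      = (Measure.pi μ).withDensity fun x ↦ ENNReal.ofReal (∏ i, f i (x i)) := by
  have (i : ι) := isFiniteMeasure_withDensity_ofReal (hf i).hasFiniteIntegral
  refine Measure.pi_eq fun s hs ↦ ?_
  have hfs (i : ι) : Integrable (f i) ((μ i).restrict (s i)) := (hf i).restrict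
  rw [withDensity_apply _ (.univ_pi hs), Measure.restrict_pi_pi,
    ← ofReal_integral_eq_lintegral_ofReal (.fintype_prod_dep hfs)
      (ae_of_all _ fun x ↦ Finset.prod_nonneg fun i _ ↦ hf0 i _),
    integral_fintype_prod_eq_prod,
    ENNReal.ofReal_prod_of_nonneg fun i _ ↦ integral_nonneg (hf0 i)]
  refine Finset.prod_congr rfl fun i _ ↦ ?_
  rw [withDensity_apply _ (hs i),
    ofReal_integral_eq_lintegral_ofReal (hfs i) (ae_of_all _ (hf0 i))]

lemma measurePreserving_comp_embedding {κ : Type*} [Fintype κ] {α : ι → Type*}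
    [∀ i, MeasurableSpace (α i)] (μ : ∀ i, Measure (α i)) [∀ i, IsProbabilityMeasure (μ i)]
    (e : κ ↪ ι) :
    MeasurePreserving (fun (x : ∀ i, α i) l ↦ x (e l)) (Measure.pi μ)
      (Measure.pi fun l ↦ μ (e l)) where
  measurable := by fun_prop
  map_eq := by
    simpa only [Measure.infinitePi_eq_pi] using
      Measure.map_infinitePi_infinitePi_of_inj (P := μ) e.injective

variable {𝒳 : Type*} [MeasurableSpace 𝒳] {Q : Measure 𝒳} [IsProbabilityMeasure Q] {r : 𝒳 → ℝ}

lemma integrable_finset_prod_eval (hr : Integrable r Q) (s : Finset ι) :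
    Integrable (fun x : ι → 𝒳 ↦ ∏ j ∈ s, r (x j)) (Measure.pi fun _ ↦ Q) := by
  classical
  have h : Integrable (fun x : ι → 𝒳 ↦ ∏ j, (if j ∈ s then r else 1) (x j))
      (Measure.pi fun _ ↦ Q) := by
    refine Integrable.fintype_prod (f := fun j ↦ if j ∈ s then r else 1) fun j ↦ ?_
    split_ifs
    exacts [hr, integrable_const 1]
  simpa [ite_apply, Finset.prod_ite_mem] using h

lemma memLp_two_finset_prod_eval (hr : MemLp r 2 Q) (s : Finset ι) :
    MemLp (fun x : ι → 𝒳 ↦ ∏ j ∈ s, r (x j)) 2 (Measure.pi fun _ ↦ Q) := by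
  have hint := integrable_finset_prod_eval (hr.integrable one_le_two) s
  rw [memLp_two_iff_integrable_sq hint.aestronglyMeasurable]
  simpa only [Finset.prod_pow] using integrable_finset_prod_eval hr.integrable_sq s

lemma integral_finset_prod_mul_finset_prod_eval [DecidableEq ι] (s t : Finset ι) :
    ∫ x : ι → 𝒳, (∏ j ∈ s, r (x j)) * ∏ j ∈ t, r (x j) ∂(Measure.pi fun _ ↦ Q)
      = (∫ a, r a ^ 2 ∂Q) ^ #(s ∩ t) * (∫ a, r a ∂Q) ^ #(s ∆ t) := by
  have hfactor (x : ι → 𝒳) : (∏ j ∈ s, r (x j)) * ∏ j ∈ t, r (x j)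
      = ∏ j, (if j ∈ s then r (x j) else 1) * (if j ∈ t then r (x j) else 1) := by
    rw [Finset.prod_mul_distrib]
    simp only [Finset.prod_ite_mem, Finset.univ_inter]
  simp_rw [hfactor]
  rw [integral_fintype_prod_eq_prod
    (fun j a ↦ (if j ∈ s then r a else 1) * (if j ∈ t then r a else 1))]
  have hmoment (j : ι) :
      ∫ a, (if j ∈ s then r a else 1) * (if j ∈ t then r a else 1) ∂Q
        = (if j ∈ s ∩ t then ∫ a, r a ^ 2 ∂Q else 1) * (if j ∈ s ∆ t then ∫ a, r a ∂Q else 1) := by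
    by_cases hs : j ∈ s <;> by_cases ht : j ∈ t <;> simp [hs, ht, Finset.mem_symmDiff, sq]
  rw [Finset.prod_congr rfl fun j _ ↦ hmoment j, Finset.prod_mul_distrib]
  simp only [Finset.prod_ite_mem, Finset.univ_inter, Finset.prod_const]

lemma integral_finset_prod_eval (s : Finset ι) :
    ∫ x : ι → 𝒳, ∏ j ∈ s, r (x j) ∂(Measure.pi fun _ ↦ Q) = (∫ a, r a ∂Q) ^ #s := by
  classical
  have hs : s ∆ ∅ = s := symmDiff_bot s
  simpa [hs] using integral_finset_prod_mul_finset_prod_eval (Q := Q) (r := r) s ∅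

lemma covariance_finset_prod_eval [DecidableEq ι] (hr : MemLp r 2 Q) (hr1 : ∫ a, r a ∂Q = 1)
    (s t : Finset ι) :
    cov[fun x : ι → 𝒳 ↦ ∏ j ∈ s, r (x j), fun x ↦ ∏ j ∈ t, r (x j); Measure.pi fun _ ↦ Q]
      = (∫ a, r a ^ 2 ∂Q) ^ #(s ∩ t) - 1 := by
  rw [covariance_eq_sub (memLp_two_finset_prod_eval hr s) (memLp_two_finset_prod_eval hr t)]
  simp [integral_finset_prod_mul_finset_prod_eval, integral_finset_prod_eval, hr1]

end Product

section UStatistic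

open Finset

variable {𝒳 ι κ : Type*} [Fintype ι] [Fintype κ]

/-- The U-statistic of a (not necessarily symmetric) kernel `h` at the sample `x`: the average of
`h` over all injective selections of sample points. Arguments of the kernel are indexed by `κ`,
sample points by `ι`. -/
noncomputable def uStatistic (h : (κ → 𝒳) → ℝ) (x : ι → 𝒳) : ℝ :=
  𝔼 e : κ ↪ ι, h (x ∘ e)

/-- The importance weight `∏ l, r (y l)` of a tuple `y`, used as a kernel for U-statistics. -/
def importanceWeight (r : 𝒳 → ℝ) (y : κ → 𝒳) : ℝ :=
  ∏ l, r (y l)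

lemma uStatistic_eq_factorial_div_mul_sum [DecidableEq ι] [DecidableEq κ]
    (hκι : Fintype.card κ ≤ Fintype.card ι) (h : (κ → 𝒳) → ℝ) (x : ι → 𝒳) :
    uStatistic h x
      = ((Fintype.card ι - Fintype.card κ).factorial : ℝ) / (Fintype.card ι).factorial *
        ∑ i : κ → ι with Function.Injective i, h (x ∘ i) := by
  have hsum : ∑ e : κ ↪ ι, h (x ∘ e) = ∑ i : κ → ι with Function.Injective i, h (x ∘ i) := by
    rw [← Fintype.sum_equiv (Equiv.subtypeInjectiveEquivEmbedding κ ι)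
      (fun i ↦ h (x ∘ i.1)) _ fun _ ↦ rfl]
    exact (sum_subtype _ (by simp) fun i ↦ h (x ∘ i)).symm
  rw [uStatistic, Fintype.expect_eq_sum_div_card, hsum, Fintype.card_embedding_eq,
    ← Nat.factorial_mul_descFactorial hκι, Nat.cast_mul]
  have : (((Fintype.card ι - Fintype.card κ).factorial : ℕ) : ℝ) ≠ 0 := by positivity
  field_simp

lemma dStat_eq_uStatistic {n m : ℕ} (hmn : m ≤ n) (r : 𝒳 → ℝ) (x : Fin n → 𝒳) :
    dStat r n m x = uStatistic (importanceWeight (κ := Fin m) r) x := by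
  rw [uStatistic_eq_factorial_div_mul_sum (by simpa using hmn)]
  simp only [dStat, importanceWeight, Fintype.card_fin, Function.comp_apply]

lemma cStat_eq_uStatistic {n m : ℕ} (hmn : m ≤ n) (r : 𝒳 → ℝ) (A : ∀ k : ℕ, Set (Fin k → 𝒳))
    (x : Fin n → 𝒳) :
    cStat r A n m x = uStatistic ((A m).indicator (importanceWeight r)) x := by
  rw [uStatistic_eq_factorial_div_mul_sum (by simpa using hmn)]
  classical
  simp only [cStat, importanceWeight, Fintype.card_fin, Set.indicator_apply, mul_ite, mul_one,
    mul_zero, Function.comp_def]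

lemma uStatistic_importanceWeight (r : 𝒳 → ℝ) (x : ι → 𝒳) :
    uStatistic (importanceWeight (κ := κ) r) x
      = 𝔼 t ∈ univ.powersetCard (Fintype.card κ), ∏ j ∈ t, r (x j) := by
  rw [← expect_embedding_map (κ := κ) fun t ↦ ∏ j ∈ t, r (x j)]
  simp only [uStatistic, importanceWeight, prod_map, Function.comp_apply]

lemma uStatistic_nonneg {h : (κ → 𝒳) → ℝ} (hh : 0 ≤ h) :
    0 ≤ (uStatistic h : (ι → 𝒳) → ℝ) :=
  fun _ ↦ expect_nonneg fun _ _ ↦ hh _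

lemma uStatistic_mono {h h' : (κ → 𝒳) → ℝ} (hh : h ≤ h') :
    (uStatistic h : (ι → 𝒳) → ℝ) ≤ uStatistic h' :=
  fun _ ↦ expect_le_expect fun _ _ ↦ hh _

variable [MeasurableSpace 𝒳] {Q : Measure 𝒳} [IsProbabilityMeasure Q]

lemma memLp_uStatistic {h : (κ → 𝒳) → ℝ} {p : ℝ≥0∞} (hh : MemLp h p (Measure.pi fun _ ↦ Q)) :
    MemLp (uStatistic h) p (Measure.pi fun _ : ι ↦ Q) := by
  have hterm (e : κ ↪ ι) : MemLp (fun x : ι → 𝒳 ↦ h (x ∘ e)) p (Measure.pi fun _ ↦ Q) :=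
    hh.comp_measurePreserving (measurePreserving_comp_embedding (fun _ ↦ Q) e)
  have hsum := (memLp_finsetSum univ fun e _ ↦ hterm e).mul_const
    ((Fintype.card (κ ↪ ι) : ℝ)⁻¹)
  simp only [← div_eq_mul_inv, ← Fintype.expect_eq_sum_div_card] at hsum
  exact hsum

lemma integral_uStatistic [Nonempty (κ ↪ ι)] {h : (κ → 𝒳) → ℝ}
    (hh : Integrable h (Measure.pi fun _ ↦ Q)) :
    ∫ x : ι → 𝒳, uStatistic h x ∂(Measure.pi fun _ ↦ Q)
      = ∫ y, h y ∂(Measure.pi fun _ ↦ Q) := by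
  have hpres (e : κ ↪ ι) := measurePreserving_comp_embedding (fun _ ↦ Q) e
  have hint (e : κ ↪ ι) : Integrable (fun x : ι → 𝒳 ↦ h (x ∘ e)) (Measure.pi fun _ ↦ Q) :=
    (hpres e).integrable_comp_of_integrable hh
  have hterm (e : κ ↪ ι) : ∫ x : ι → 𝒳, h (x ∘ e) ∂(Measure.pi fun _ ↦ Q)
      = ∫ y, h y ∂(Measure.pi fun _ ↦ Q) := by
    rw [← (hpres e).map_eq] at hh ⊢
    exact (integral_map (hpres e).measurable.aemeasurable hh.aestronglyMeasurable).symm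
  simp only [uStatistic, Fintype.expect_eq_sum_div_card]
  rw [integral_div, integral_finsetSum _ fun e _ ↦ hint e,
    ← Fintype.expect_eq_sum_div_card]
  simp only [hterm, Fintype.expect_const]

end UStatistic

section ResamplingTest

open Finset

/-- The quantity `V(n, m)` of the paper, with `ρ` standing for the second moment `E_Q[r²]`: the
variance of the U-statistic whose kernel is the importance weight of an `m`-tuple. -/
noncomputable def resamplingVariance (n m : ℕ) (ρ : ℝ) : ℝ :=
  (n.choose m : ℝ)⁻¹ * ∑ ℓ ∈ Icc 1 m,
    (m.choose ℓ : ℝ) * ((n - m).choose (m - ℓ) : ℝ) * (ρ ^ ℓ - 1)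

lemma variance_fun_expect {Ω α : Type*} [MeasurableSpace Ω] {μ : Measure Ω} [IsFiniteMeasure μ]
    {T : Finset α} {f : α → Ω → ℝ} (hf : ∀ i ∈ T, MemLp (f i) 2 μ) :
    Var[fun ω ↦ 𝔼 i ∈ T, f i ω; μ] = 𝔼 i ∈ T, 𝔼 j ∈ T, cov[f i, f j; μ] := by
  simp only [expect_eq_sum_div_card, div_eq_inv_mul, variance_const_mul]
  rw [variance_fun_sum' hf, ← mul_sum]
  ring

variable {𝒳 ι κ : Type*} [Fintype ι] [Fintype κ]

lemma expect_powersetCard_pow_card_inter_sub_one [DecidableEq ι] (ρ : ℝ) (s : Finset ι) :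
    𝔼 t ∈ univ.powersetCard #s, (ρ ^ #(s ∩ t) - 1)
      = resamplingVariance (Fintype.card ι) #s ρ := by
  have hsum : ∑ l ∈ Icc 1 #s, ((#s).choose l * (#sᶜ).choose (#s - l) : ℝ) * (ρ ^ l - 1)
      = ∑ l ∈ range (#s + 1), ((#s).choose l * (#sᶜ).choose (#s - l) : ℝ) * (ρ ^ l - 1) := by
    refine sum_subset (fun l hl ↦ by grind) fun l hl hl' ↦ ?_
    obtain rfl : l = 0 := by grind
    simp
  rw [expect_eq_sum_div_card, sum_powersetCard_card_inter s #s fun l ↦ ρ ^ l - 1, ← hsum,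
    card_powersetCard, card_univ, card_compl, div_eq_inv_mul, resamplingVariance]

variable [MeasurableSpace 𝒳] {Q : Measure 𝒳} [IsProbabilityMeasure Q] {r : 𝒳 → ℝ}

lemma variance_uStatistic_importanceWeight (hκι : Fintype.card κ ≤ Fintype.card ι)
    (hr : MemLp r 2 Q) (hr1 : ∫ a, r a ∂Q = 1) :
    Var[uStatistic (importanceWeight (κ := κ) r); Measure.pi fun _ : ι ↦ Q]
      = resamplingVariance (Fintype.card ι) (Fintype.card κ) (∫ a, r a ^ 2 ∂Q) := by
  classical
  calc Var[uStatistic (importanceWeight (κ := κ) r); Measure.pi fun _ : ι ↦ Q]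
      = Var[fun x : ι → 𝒳 ↦ 𝔼 t ∈ univ.powersetCard (Fintype.card κ), ∏ j ∈ t, r (x j);
          Measure.pi fun _ ↦ Q] := by
        rw [← funext (uStatistic_importanceWeight r)]
    _ = 𝔼 s ∈ univ.powersetCard (Fintype.card κ), 𝔼 t ∈ univ.powersetCard (Fintype.card κ),
          ((∫ a, r a ^ 2 ∂Q) ^ #(s ∩ t) - 1) := by
        rw [variance_fun_expect fun s _ ↦ memLp_two_finset_prod_eval hr s]
        exact expect_congr rfl fun s _ ↦ expect_congr rfl fun t _ ↦
          covariance_finset_prod_eval hr hr1 s t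
    _ = 𝔼 s ∈ (univ : Finset ι).powersetCard (Fintype.card κ),
          resamplingVariance (Fintype.card ι) (Fintype.card κ) (∫ a, r a ^ 2 ∂Q) := by
        refine expect_congr rfl fun s hs ↦ ?_
        rw [← (mem_powersetCard.1 hs).2, expect_powersetCard_pow_card_inter_sub_one]
    _ = resamplingVariance (Fintype.card ι) (Fintype.card κ) (∫ a, r a ^ 2 ∂Q) :=
        expect_const (powersetCard_nonempty.2 hκι) _

lemma integral_indicator_importanceWeight (hr : Integrable r Q) (hr0 : 0 ≤ r)
    {B : Set (κ → 𝒳)} (hB : MeasurableSet B) :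
    ∫ y, B.indicator (importanceWeight r) y ∂(Measure.pi fun _ ↦ Q)
      = (Measure.pi fun _ ↦ Q.withDensity fun a ↦ ENNReal.ofReal (r a)).real B := by
  have hW0 (y : κ → 𝒳) : 0 ≤ ∏ l, r (y l) := prod_nonneg fun l _ ↦ hr0 (y l)
  rw [pi_withDensity_ofReal (fun _ ↦ hr) fun _ ↦ hr0, measureReal_def, withDensity_apply _ hB,
    ← ofReal_integral_eq_lintegral_ofReal (integrable_finset_prod_eval hr univ).restrict
      (ae_of_all _ hW0),
    ENNReal.toReal_ofReal (integral_nonneg hW0), integral_indicator hB]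
  rfl

theorem integral_uStatistic_indicator_div_le (hκι : Fintype.card κ ≤ Fintype.card ι)
    (hr : MemLp r 2 Q) (hr0 : 0 ≤ r) (hr1 : ∫ a, r a ∂Q = 1) {B : Set (κ → 𝒳)}
    (hB : MeasurableSet B) {δ : ℝ} (hδ0 : 0 < δ) (hδ1 : δ < 1) :
    ∫ x : ι → 𝒳, uStatistic (B.indicator (importanceWeight r)) x
        / uStatistic (importanceWeight (κ := κ) r) x ∂(Measure.pi fun _ ↦ Q)
      ≤ (Measure.pi fun _ ↦ Q.withDensity fun a ↦ ENNReal.ofReal (r a)).real B / (1 - δ)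
        + resamplingVariance (Fintype.card ι) (Fintype.card κ) (∫ a, r a ^ 2 ∂Q)
          / (resamplingVariance (Fintype.card ι) (Fintype.card κ) (∫ a, r a ^ 2 ∂Q) + δ ^ 2) := by
  have : Nonempty (κ ↪ ι) := Function.Embedding.nonempty_of_card_le hκι
  have hW0 : 0 ≤ importanceWeight (κ := κ) r := fun y ↦ prod_nonneg fun l _ ↦ hr0 (y l)
  have hW : MemLp (importanceWeight r) 2 (Measure.pi fun _ : κ ↦ Q) :=
    memLp_two_finset_prod_eval hr univ
  have hWint := hW.integrable one_le_two
  have hc : Integrable (uStatistic (B.indicator (importanceWeight r)))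
      (Measure.pi fun _ : ι ↦ Q) :=
    memLp_one_iff_integrable.1 (memLp_uStatistic (memLp_one_iff_integrable.2 (hWint.indicator hB)))
  have hmean_c := (integral_uStatistic (ι := ι) (hWint.indicator hB)).trans
    (integral_indicator_importanceWeight (hr.integrable one_le_two) hr0 hB)
  have hmean_d : ∫ x : ι → 𝒳, uStatistic (importanceWeight (κ := κ) r) x
      ∂(Measure.pi fun _ ↦ Q) = 1 := by
    rw [integral_uStatistic hWint]
    exact (integral_finset_prod_eval univ).trans (by rw [hr1, one_pow])
  have hbound := integral_div_le_integral_div_add_variance_div hc (memLp_uStatistic hW)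
    (uStatistic_nonneg (Set.indicator_nonneg fun y _ ↦ hW0 y))
    (uStatistic_mono (Set.indicator_le_self' fun y _ ↦ hW0 y)) hδ0 (hmean_d ▸ hδ1)
  rwa [hmean_c, hmean_d, variance_uStatistic_importanceWeight hκι hr hr1] at hbound

end ResamplingTest

/-- **Finite-sample level of the DRPL resampling test.** Fix `1 ≤ m ≤ n` and suppose
`E_Q[r̄(X₁)²] < ∞`. Let `α_φ := P^⊗m(A m)` be the rejection probability of `φ_m` under
i.i.d. target data and set
`V(n,m) := C(n,m)⁻¹ · Σ_{ℓ=1}^m C(m,ℓ)·C(n−m,m−ℓ)·(E_Q[r̄(X₁)²]^ℓ − 1)`.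
Then for every `δ ∈ (0,1)` the rejection probability `E_Q[c(n,m)/d(n,m)]` of the DRPL
resampling test is at most `α_φ/(1−δ) + V(n,m)/(V(n,m)+δ²)`; consequently it is at most
the infimum of this bound over `δ ∈ (0,1)`. -/
theorem drpl_finite_sample_level
    {𝒳 : Type*} [MeasurableSpace 𝒳]
    (μ : Measure 𝒳) [SigmaFinite μ]
    (q : 𝒳 → ℝ≥0∞) (hq : Measurable q)
    (Q : Measure 𝒳) [IsProbabilityMeasure Q] (hQ : Q = μ.withDensity q)
    (r : 𝒳 → ℝ) (hr : Measurable r) (hr0 : ∀ x, 0 ≤ r x)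
    (hr1 : ∫ x, r x ∂Q = 1)
    (P : Measure 𝒳) [IsProbabilityMeasure P]
    (hP : P = μ.withDensity fun x => ENNReal.ofReal (r x) * q x)
    (A : ∀ k : ℕ, Set (Fin k → 𝒳)) (hA : ∀ k, MeasurableSet (A k))
    (n m : ℕ) (hm1 : 1 ≤ m) (hmn : m ≤ n)
    (hr2 : Integrable (fun x => r x ^ 2) Q) :
    (∀ δ ∈ Set.Ioo (0 : ℝ) 1,
      ∫ x, cStat r A n m x / dStat r n m x ∂(Measure.pi fun _ : Fin n => Q)
        ≤ ((Measure.pi fun _ : Fin m => P) (A m)).toReal / (1 - δ) +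
            ((n.choose m : ℝ)⁻¹ * ∑ ℓ ∈ Finset.Icc 1 m,
                (m.choose ℓ : ℝ) * ((n - m).choose (m - ℓ) : ℝ) *
                  ((∫ x, r x ^ 2 ∂Q) ^ ℓ - 1)) /
              ((n.choose m : ℝ)⁻¹ * ∑ ℓ ∈ Finset.Icc 1 m,
                (m.choose ℓ : ℝ) * ((n - m).choose (m - ℓ) : ℝ) *
                  ((∫ x, r x ^ 2 ∂Q) ^ ℓ - 1) + δ ^ 2))
    ∧
    ∫ x, cStat r A n m x / dStat r n m x ∂(Measure.pi fun _ : Fin n => Q)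
      ≤ ⨅ δ : Set.Ioo (0 : ℝ) 1,
          (((Measure.pi fun _ : Fin m => P) (A m)).toReal / (1 - (δ : ℝ)) +
            ((n.choose m : ℝ)⁻¹ * ∑ ℓ ∈ Finset.Icc 1 m,
                (m.choose ℓ : ℝ) * ((n - m).choose (m - ℓ) : ℝ) *
                  ((∫ x, r x ^ 2 ∂Q) ^ ℓ - 1)) /
              ((n.choose m : ℝ)⁻¹ * ∑ ℓ ∈ Finset.Icc 1 m,
                (m.choose ℓ : ℝ) * ((n - m).choose (m - ℓ) : ℝ) *
                  ((∫ x, r x ^ 2 ∂Q) ^ ℓ - 1) + (δ : ℝ) ^ 2)) := by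
  have hP' : P = Q.withDensity fun x ↦ ENNReal.ofReal (r x) := by
    rw [hP, hQ, ← withDensity_mul _ hq hr.ennreal_ofReal]
    simp only [Pi.mul_def, mul_comm]
  have hr_memLp : MemLp r 2 Q := (memLp_two_iff_integrable_sq hr.aestronglyMeasurable).2 hr2
  have hbound (δ : ℝ) (hδ : δ ∈ Set.Ioo (0 : ℝ) 1) :
      ∫ x, cStat r A n m x / dStat r n m x ∂(Measure.pi fun _ : Fin n ↦ Q)
        ≤ ((Measure.pi fun _ : Fin m ↦ P) (A m)).toReal / (1 - δ)
          + resamplingVariance n m (∫ x, r x ^ 2 ∂Q)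
            / (resamplingVariance n m (∫ x, r x ^ 2 ∂Q) + δ ^ 2) := by
    simp only [cStat_eq_uStatistic hmn, dStat_eq_uStatistic hmn, hP']
    simpa only [Fintype.card_fin, measureReal_def] using
      integral_uStatistic_indicator_div_le (ι := Fin n) (by simpa using hmn) hr_memLp hr0 hr1
        (hA m) hδ.1 hδ.2
  have : Nonempty (Set.Ioo (0 : ℝ) 1) := ⟨⟨1 / 2, by norm_num⟩⟩
  exact ⟨hbound, le_ciInf fun δ ↦ hbound δ δ.2⟩
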